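/- For every fixed v > 0, the function f(v,t) = (Γ(η−λ+1/2)/Γ(2η+1)) · e^{−Ψ(v,t)/2} · Ψ(v,t)^λ · M_{λ,η}(Ψ(v,t)) satisfies lim_{t→T⁻} v · Ψ(v,t) · (∂f/∂v)(v,t) / f(v,t) = 2C/σ²; i.e., the logarithmic derivative f_v/f is asymptotically equivalent to (2C/σ²)·1/(v·Ψ(v,t)) as Ψ(v,t) → ∞. -/

import Mathlib

/-!
Write `a = η - λ + 1/2` and `b = 1 + 2η`, so that `b - a = η + λ + 1/2` and, because
`η > |λ + 1/2|`, we have `1 < a < b`. Up to a nonzero constant `f(v,t) = g(Ψ(v,t))` with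
`g(z) = e^{-z} z^{b-a} M(a,b,z)`, and `Ψ` is linear in `v`, so the quantity of interest is
`z² g'(z) / g(z)` at `z = Ψ(v,t) → ∞`.

The contiguous relation `z M'(a,b,z) = (z + a - b) M(a,b,z) + (b - a) M(a-1,b,z)`
(`kummerM_contiguous`, checked on coefficients) gives
`z² g'(z) / g(z) = (b - a) · z M(a-1,b,z) / M(a,b,z)`.

The power series `z M(a-1,b,z)` and `M(a,b,z)` have coefficients whose ratio tends to `a - 1`;
since the latter series has positive coefficients, an Abelian argument
(`tendsto_powerSeries_ratio`) shows that the quotient of the sums has the same limit as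
`z → ∞`. The limit is therefore `(b - a)(a - 1) = η² - (λ + 1/2)² = 2C/σ²`.
-/

/-- The Kummer confluent hypergeometric function
`M(a,b,z) = ∑ ((a)_n / (b)_n) zⁿ/n!`. -/
noncomputable def kummerM (a b z : ℝ) : ℝ :=
  ∑' n : ℕ, ((ascPochhammer ℝ n).eval a / (ascPochhammer ℝ n).eval b) * z ^ n / (n.factorial : ℝ)

/-- The Whittaker function `M_{κ,η}(z) = e^{-z/2} z^{η+1/2} M(η-κ+1/2, 1+2η, z)`. -/
noncomputable def whittakerM (κ η z : ℝ) : ℝ :=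
  Real.exp (-z / 2) * z ^ (η + 1/2) * kummerM (η - κ + 1/2) (1 + 2*η) z

open Filter Topology

/-- The `n`-th Taylor coefficient `(a)_n / ((b)_n n!)` of `M(a,b,·)`. -/
noncomputable def kummerCoeff (a b : ℝ) (n : ℕ) : ℝ :=
  (ascPochhammer ℝ n).eval a / (ascPochhammer ℝ n).eval b / (n.factorial : ℝ)

lemma kummerM_eq (a b z : ℝ) : kummerM a b z = ∑' n, kummerCoeff a b n * z ^ n := by
  unfold kummerM kummerCoeff
  congr 1
  ext n
  ring

lemma kummerCoeff_pos {a b : ℝ} (ha : 0 < a) (hb : 0 < b) (n : ℕ) : 0 < kummerCoeff a b n := by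
  have h1 := ascPochhammer_pos n a ha
  have h2 := ascPochhammer_pos n b hb
  unfold kummerCoeff
  positivity

lemma kummerCoeff_succ (a : ℝ) {b : ℝ} (hb : 0 < b) (n : ℕ) :
    kummerCoeff a b (n + 1) = kummerCoeff a b n * ((a + n) / ((b + n) * (n + 1))) := by
  have h2 := (ascPochhammer_pos n b hb).ne'
  have h3 : b + n ≠ 0 := by positivity
  have h4 : (n.factorial : ℝ) ≠ 0 := by positivity
  have h5 : (n + 1 : ℝ) ≠ 0 := by positivity
  unfold kummerCoeff
  rw [ascPochhammer_succ_eval, ascPochhammer_succ_eval, Nat.factorial_succ]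
  push_cast
  field_simp

lemma ascPochhammer_shift (a : ℝ) (n : ℕ) :
    (ascPochhammer ℝ n).eval (a - 1) * (a - 1 + n) = (a - 1) * (ascPochhammer ℝ n).eval a := by
  rw [← ascPochhammer_succ_eval, ascPochhammer_succ_left]
  simp

/-- `(a-1)_n (a-1+n) = (a-1) (a)_n`, read on coefficients. -/
lemma kummerCoeff_shift (a b : ℝ) (n : ℕ) :
    kummerCoeff (a - 1) b n * (a - 1 + n) = (a - 1) * kummerCoeff a b n := by
  have h := ascPochhammer_shift a n
  unfold kummerCoeff
  calc _ = ((ascPochhammer ℝ n).eval (a - 1) * (a - 1 + n)) / (ascPochhammer ℝ n).eval b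
        / (n.factorial : ℝ) := by ring
    _ = _ := by rw [h]; ring

lemma kummerCoeff_le {a b : ℝ} (ha : 0 < a) (hab : a ≤ b) (n : ℕ) :
    kummerCoeff a b n ≤ 1 / (n.factorial : ℝ) := by
  have hb : 0 < b := ha.trans_le hab
  have h2 := ascPochhammer_pos n b hb
  unfold kummerCoeff
  gcongr
  rw [div_le_one h2]
  induction n with
  | zero => simp
  | succ n ih =>
    rw [ascPochhammer_succ_eval, ascPochhammer_succ_eval]
    have h1 := ascPochhammer_pos n a ha
    have h2 := ascPochhammer_pos n b hb
    have := ih h2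
    gcongr

lemma kummerCoeff_summable {a b : ℝ} (ha : 0 < a) (hab : a ≤ b) (z : ℝ) :
    Summable fun n => kummerCoeff a b n * z ^ n := by
  refine Summable.of_norm_bounded (Real.summable_pow_div_factorial |z|) fun n => ?_
  have h0 := (kummerCoeff_pos ha (ha.trans_le hab) n).le
  rw [norm_mul, norm_pow, Real.norm_eq_abs, Real.norm_eq_abs, abs_of_nonneg h0]
  calc _ ≤ 1 / (n.factorial : ℝ) * |z| ^ n := by
        gcongr
        exact kummerCoeff_le ha hab n
    _ = _ := by ring

lemma summable_deriv_bound (R : ℝ) :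
    Summable fun n : ℕ => 1 / (n.factorial : ℝ) * (n * R ^ (n - 1)) := by
  rw [← summable_nat_add_iff 1]
  refine (Real.summable_pow_div_factorial R).congr fun n => ?_
  have h5 : (n + 1 : ℝ) ≠ 0 := by positivity
  rw [Nat.factorial_succ]
  push_cast
  field_simp

lemma norm_deriv_term_le {a b : ℝ} (ha : 0 < a) (hab : a ≤ b) {y R : ℝ} (hy : |y| ≤ R) (n : ℕ) :
    ‖kummerCoeff a b n * (n * y ^ (n - 1))‖ ≤ 1 / (n.factorial : ℝ) * (n * R ^ (n - 1)) := by
  have h0 := (kummerCoeff_pos ha (ha.trans_le hab) n).le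
  rw [norm_mul, norm_mul, norm_pow, Real.norm_eq_abs, Real.norm_eq_abs, Real.norm_eq_abs,
    abs_of_nonneg h0, Nat.abs_cast]
  gcongr
  exact kummerCoeff_le ha hab n

lemma kummerM_hasDerivAt {a b : ℝ} (ha : 0 < a) (hab : a ≤ b) (z : ℝ) :
    HasDerivAt (kummerM a b) (∑' n : ℕ, kummerCoeff a b n * (n * z ^ (n - 1))) z := by
  have hfun : kummerM a b = fun z => ∑' n, kummerCoeff a b n * z ^ n :=
    funext fun z => kummerM_eq a b z
  rw [hfun]
  refine hasDerivAt_tsum_of_isPreconnected (t := Metric.ball (0 : ℝ) (|z| + 1))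
    (y₀ := 0) (summable_deriv_bound (|z| + 1))
    Metric.isOpen_ball (convex_ball _ _).isPreconnected
    (fun n y _ => (hasDerivAt_pow n y).const_mul _)
    (fun n y hy => norm_deriv_term_le ha hab ?_ n) ?_ (kummerCoeff_summable ha hab 0) ?_
  · simpa using (mem_ball_zero_iff.1 hy).le
  · rw [mem_ball_zero_iff, norm_zero]; positivity
  · rw [mem_ball_zero_iff, Real.norm_eq_abs]; linarith

/-- The contiguous relation `z M'(a) = (z + a - b) M(a) + (b - a) M(a - 1)`. -/
lemma kummerM_contiguous {a b : ℝ} (ha : 1 < a) (hab : a ≤ b) (z : ℝ) :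
    z * (∑' n : ℕ, kummerCoeff a b n * (n * z ^ (n - 1))) =
      (z + a - b) * kummerM a b z + (b - a) * kummerM (a - 1) b z := by
  have ha0 : 0 < a := by linarith
  have hb : 0 < b := by linarith
  have sA := kummerCoeff_summable ha0 hab z
  have sB := kummerCoeff_summable (a := a - 1) (b := b) (by linarith) (by linarith) z
  have sD : Summable fun n : ℕ => kummerCoeff a b n * (n * z ^ (n - 1)) :=
    Summable.of_norm_bounded (summable_deriv_bound |z|)
      fun n => norm_deriv_term_le ha0 hab le_rfl n
  rw [kummerM_eq, kummerM_eq]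
  have key := (((sD.mul_left z).hasSum.sub (sA.mul_left (a - b)).hasSum).sub
    (sB.mul_left (b - a)).hasSum)
  have key2 := (hasSum_nat_add_iff' (f := fun n : ℕ => z * (kummerCoeff a b n * (n * z ^ (n - 1)))
    - (a - b) * (kummerCoeff a b n * z ^ n) - (b - a) * (kummerCoeff (a - 1) b n * z ^ n)) 1).2 key
  have h3 : HasSum (fun n : ℕ => z * (kummerCoeff a b n * z ^ n))
      (z * ∑' n, kummerCoeff a b n * z ^ n) := sA.hasSum.mul_left z
  rw [show (fun n : ℕ => z * (kummerCoeff a b (n + 1) * (((n + 1 : ℕ) : ℝ) * z ^ (n + 1 - 1)))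
      - (a - b) * (kummerCoeff a b (n + 1) * z ^ (n + 1))
      - (b - a) * (kummerCoeff (a - 1) b (n + 1) * z ^ (n + 1)))
      = fun n => z * (kummerCoeff a b n * z ^ n) from funext fun n => ?_] at key2
  · have h4 := key2.unique h3
    simp only [tsum_mul_left, Finset.sum_range_one] at h4
    simp [kummerCoeff] at h4 ⊢
    linarith
  · have hs := kummerCoeff_shift a b (n + 1)
    have hc := kummerCoeff_succ a hb n
    have h2 : a + n ≠ 0 := by positivity
    have h4 : b + n ≠ 0 := by positivity
    have h6 : (n + 1 : ℝ) ≠ 0 := by positivity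
    have hs' : kummerCoeff (a - 1) b (n + 1) = (a - 1) * kummerCoeff a b (n + 1) / (a + n) := by
      rw [eq_div_iff h2, ← hs]
      push_cast
      ring
    rw [hs', hc]
    simp only [add_tsub_cancel_right]
    push_cast
    field_simp
    ring

/-- If `p n > 0` and `q n / p n → L`, the sums of the power series with coefficients `q`, `p`
have quotient tending to `L` at infinity: the tails compare termwise and the initial segment,
a polynomial of degree below `N + 1`, is dominated by the single term `p (N+1) z^(N+1)`. -/
lemma tendsto_powerSeries_ratio {p q : ℕ → ℝ} {L : ℝ} (hp : ∀ n, 0 < p n)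
    (sp : ∀ z : ℝ, Summable fun n => p n * z ^ n) (sq : ∀ z : ℝ, Summable fun n => q n * z ^ n)
    (h : Tendsto (fun n => q n / p n) atTop (𝓝 L)) :
    Tendsto (fun z : ℝ => (∑' n, q n * z ^ n) / (∑' n, p n * z ^ n)) atTop (𝓝 L) := by
  rw [Metric.tendsto_nhds]
  intro ε hε
  obtain ⟨N, hN⟩ := eventually_atTop.1 ((Metric.tendsto_nhds.1 h) (ε / 2) (by positivity))
  have hr : ∀ n ≥ N, |q n - L * p n| ≤ ε / 2 * p n := fun n hn => by
    have h1 := (hN n hn).le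
    rw [Real.dist_eq] at h1
    have h2 : q n - L * p n = (q n / p n - L) * p n := by
      have := (hp n).ne'
      field_simp
    rw [h2, abs_mul, abs_of_pos (hp n)]
    exact mul_le_mul_of_nonneg_right h1 (hp n).le
  set S := ∑ n ∈ Finset.range N, |q n - L * p n| with hS
  have hS0 : 0 ≤ S := Finset.sum_nonneg fun _ _ => abs_nonneg _
  have hpN := hp (N + 1)
  filter_upwards [eventually_ge_atTop (1 : ℝ),
    eventually_gt_atTop (S / (ε / 2 * p (N + 1)))] with z hz1 hz2
  have hz0 : 0 < z := by linarith
  have hP : p (N + 1) * z ^ (N + 1) ≤ ∑' n, p n * z ^ n :=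
    (sp z).le_tsum (N + 1) fun n _ => by have := hp n; positivity
  have hP0 : 0 < ∑' n, p n * z ^ n := lt_of_lt_of_le (by positivity) hP
  rw [div_lt_iff₀ (by positivity)] at hz2
  have hR : (∑' n, q n * z ^ n) - L * (∑' n, p n * z ^ n) = ∑' n, (q n - L * p n) * z ^ n := by
    rw [← tsum_mul_left, ← (sq z).tsum_sub ((sp z).mul_left L)]
    congr 1; ext n; ring
  have hfin := hasSum_sum_of_ne_finset_zero (L := .unconditional ℕ)
    (f := fun n => if n < N then |q n - L * p n| * z ^ n else 0) (s := Finset.range N)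
    (fun n hn => if_neg (by simpa using hn))
  have hb : |∑' n, (q n - L * p n) * z ^ n| ≤ ε / 2 * (∑' n, p n * z ^ n)
      + ∑ n ∈ Finset.range N, (if n < N then |q n - L * p n| * z ^ n else 0) := by
    rw [← Real.norm_eq_abs]
    refine tsum_of_norm_bounded (((sp z).hasSum.mul_left (ε / 2)).add hfin) fun n => ?_
    rw [norm_mul, norm_pow, Real.norm_eq_abs, Real.norm_eq_abs, abs_of_pos hz0]
    have hpn := hp n
    split_ifs with hn
    · have : 0 ≤ ε / 2 * (p n * z ^ n) := by positivity
      linarith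
    · have := mul_le_mul_of_nonneg_right (hr n (not_lt.1 hn)) (pow_nonneg hz0.le n)
      linarith
  have hc : ∑ n ∈ Finset.range N, (if n < N then |q n - L * p n| * z ^ n else 0) ≤ S * z ^ N := by
    rw [hS, Finset.sum_mul]
    refine Finset.sum_le_sum fun n hn => ?_
    have hn' := Finset.mem_range.1 hn
    rw [if_pos hn']
    gcongr
  have hd : S * z ^ N < ε / 2 * (p (N + 1) * z ^ (N + 1)) := by
    have := mul_lt_mul_of_pos_right hz2 (pow_pos hz0 N)
    calc _ < _ := this
      _ = _ := by ring
  have he := mul_le_mul_of_nonneg_left hP (half_pos hε).le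
  have hq : (∑' n, q n * z ^ n) / (∑' n, p n * z ^ n) - L =
      (∑' n, (q n - L * p n) * z ^ n) / (∑' n, p n * z ^ n) := by
    rw [← hR]; field_simp
  rw [Real.dist_eq, hq, abs_div, abs_of_pos hP0, div_lt_iff₀ hP0]
  linarith

lemma tendsto_add_div_add (x y : ℝ) :
    Tendsto (fun n : ℕ => (x + n) / (y + n)) atTop (𝓝 1) := by
  have := tendsto_add_mul_div_add_mul_atTop_nhds x y (1 : ℝ) (one_ne_zero : (1 : ℝ) ≠ 0)
  simpa using this

lemma kummerM_ratio {a b : ℝ} (ha : 1 < a) (hab : a ≤ b) :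
    Tendsto (fun z => z * kummerM (a - 1) b z / kummerM a b z) atTop (𝓝 (a - 1)) := by
  have ha0 : 0 < a := by linarith
  have ha1 : 0 < a - 1 := by linarith
  have hb : 0 < b := by linarith
  -- the coefficients of `z * M(a-1,b,z)`
  let q : ℕ → ℝ := fun n => Nat.casesOn n 0 fun m => kummerCoeff (a - 1) b m
  have hq : ∀ z : ℝ, HasSum (fun n => q n * z ^ n) (z * kummerM (a - 1) b z) := fun z => by
    rw [← hasSum_nat_add_iff' 1, kummerM_eq]
    have h1 := (kummerCoeff_summable ha1 (by linarith : a - 1 ≤ b) z).hasSum.mul_left z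
    rw [show z * (∑' n, kummerCoeff (a - 1) b n * z ^ n) - ∑ i ∈ Finset.range 1, q i * z ^ i
      = z * ∑' n, kummerCoeff (a - 1) b n * z ^ n by simp [q]]
    have h2 : (fun n => q (n + 1) * z ^ (n + 1)) =
        fun n => z * (kummerCoeff (a - 1) b n * z ^ n) := by
      ext n
      simp only [q]
      ring
    rw [h2]
    exact h1
  have h := tendsto_powerSeries_ratio (p := kummerCoeff a b) (q := q) (L := a - 1)
    (fun n => kummerCoeff_pos ha0 hb n) (fun z => kummerCoeff_summable ha0 hab z)
    (fun z => (hq z).summable) ?_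
  · refine h.congr fun z => ?_
    rw [(hq z).tsum_eq, kummerM_eq a]
  · rw [← tendsto_add_atTop_iff_nat 1]
    have h1 := ((tendsto_add_div_add b a).mul (tendsto_add_div_add 1 (a - 1))).const_mul (a - 1)
    rw [mul_one, mul_one] at h1
    refine h1.congr fun n => ?_
    have hs := kummerCoeff_shift a b n
    have hpos := kummerCoeff_pos ha0 hb n
    have h2 : a - 1 + n ≠ 0 := by positivity
    have h3 : a + n ≠ 0 := by positivity
    have h4 : b + n ≠ 0 := by positivity
    have h5 : (1 + n : ℝ) ≠ 0 := by positivity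
    have h6 : (n + 1 : ℝ) ≠ 0 := by positivity
    simp only [q]
    rw [kummerCoeff_succ a hb, ← eq_div_iff h2] at *
    rw [hs]
    field_simp
    ring

/-- For `g(z) = e^{-z} z^{b-a} M(a,b,z)` one has `g'(z) = (b-a) e^{-z} z^{b-a-1} M(a-1,b,z)`. -/
lemma hasDerivAt_kummer_weighted {a b : ℝ} (ha : 1 < a) (hab : a ≤ b) {z : ℝ} (hz : 0 < z) :
    HasDerivAt (fun z => Real.exp (-z) * z ^ (b - a) * kummerM a b z)
      ((b - a) * Real.exp (-z) * z ^ (b - a) / z * kummerM (a - 1) b z) z := by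
  have h1 : HasDerivAt (fun z : ℝ => Real.exp (-z)) (Real.exp (-z) * (-1)) z :=
    (hasDerivAt_neg z).exp
  have h2 := Real.hasDerivAt_rpow_const (x := z) (p := b - a) (Or.inl hz.ne')
  have h3 := kummerM_hasDerivAt (by linarith : 0 < a) hab z
  have hc := kummerM_contiguous ha hab z
  refine ((h1.mul h2).mul h3).congr_deriv ?_
  rw [Real.rpow_sub_one hz.ne']
  rw [mul_comm, ← eq_div_iff hz.ne'] at hc
  rw [hc]
  simp only [Pi.mul_apply]
  field_simp
  ring

theorem stmt_14 (μ ρ k Θ σ T : ℝ) (hσ : 0 < σ) (hk : 0 < k) (hρ : ρ ≠ 0)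
    (δ C : ℝ) (hδ : 0 < δ) (hC : 0 < C)
    (lam η : ℝ)
    (hlam : lam = -(k * Θ) / σ ^ 2 + (1 - δ) * μ / (ρ * σ))
    (hη : η = Real.sqrt ((lam + 1/2) ^ 2 + 2 * C / σ ^ 2))
    (Ψ : ℝ → ℝ → ℝ)
    (hΨ : ∀ v t, Ψ v t = 2 * k * v / (σ ^ 2 * (Real.exp (k * (T - t)) - 1)))
    (f : ℝ → ℝ → ℝ)
    (hf : ∀ v t, f v t =
      Real.Gamma (η - lam + 1/2) / Real.Gamma (2 * η + 1) *
        Real.exp (-(Ψ v t) / 2) * (Ψ v t) ^ lam * whittakerM lam η (Ψ v t)) :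
    ∀ v, 0 < v →
      Filter.Tendsto (fun t => v * Ψ v t * deriv (fun v' => f v' t) v / f v t)
        (nhdsWithin T (Set.Iio T)) (nhds (2 * C / σ ^ 2)) := by
  intro v hv
  have hCσ : 0 < 2 * C / σ ^ 2 := by positivity
  have hη2 : η ^ 2 = (lam + 1/2) ^ 2 + 2 * C / σ ^ 2 := by
    rw [hη, Real.sq_sqrt (by positivity)]
  have hη0 : 0 ≤ η := hη ▸ Real.sqrt_nonneg _
  have habs : |lam + 1/2| < η := abs_lt_of_sq_lt_sq (by linarith) hη0
  obtain ⟨hl1, hl2⟩ := abs_lt.1 habs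
  obtain ⟨a, ha⟩ : ∃ a, a = η - lam + 1/2 := ⟨_, rfl⟩
  obtain ⟨b, hb⟩ : ∃ b, b = 1 + 2 * η := ⟨_, rfl⟩
  have ha1 : 1 < a := by linarith
  have hab : a ≤ b := by linarith
  have hlim : 2 * C / σ ^ 2 = (b - a) * (a - 1) := by rw [ha, hb]; nlinarith
  set G := Real.Gamma (η - lam + 1/2) / Real.Gamma (2 * η + 1) with hG
  have hG0 : 0 < G := div_pos (Real.Gamma_pos_of_pos (by linarith))
    (Real.Gamma_pos_of_pos (by linarith))
  have hfg : ∀ v t, 0 < Ψ v t →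
      f v t = G * (Real.exp (-(Ψ v t)) * (Ψ v t) ^ (b - a) * kummerM a b (Ψ v t)) := by
    intro v t h
    rw [hf, whittakerM, ← ha, ← hb]
    have e1 : Real.exp (-(Ψ v t)) = Real.exp (-(Ψ v t) / 2) * Real.exp (-(Ψ v t) / 2) := by
      rw [← Real.exp_add]; congr 1; ring
    have e2 : (Ψ v t) ^ (b - a) = (Ψ v t) ^ lam * (Ψ v t) ^ (η + 1/2) := by
      rw [← Real.rpow_add h]; congr 1; linarith
    rw [e1, e2]; ring
  have hden : ∀ t < T, 0 < σ ^ 2 * (Real.exp (k * (T - t)) - 1) := fun t ht => by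
    have : 1 < Real.exp (k * (T - t)) := Real.one_lt_exp_iff.2 (mul_pos hk (by linarith))
    have : 0 < Real.exp (k * (T - t)) - 1 := by linarith
    positivity
  have hΨpos : ∀ v t, 0 < v → t < T → 0 < Ψ v t := fun v t hv ht => by
    have := hden t ht
    rw [hΨ]; positivity
  have hΨtop : Tendsto (fun t => Ψ v t) (𝓝[<] T) atTop := by
    have h0 : Tendsto (fun t => σ ^ 2 * (Real.exp (k * (T - t)) - 1)) (𝓝[<] T) (𝓝[>] 0) := by
      refine tendsto_nhdsWithin_iff.2 ⟨?_, ?_⟩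
      · have hc : Continuous fun t => σ ^ 2 * (Real.exp (k * (T - t)) - 1) := by fun_prop
        have := hc.tendsto T
        simp only [sub_self, mul_zero, Real.exp_zero] at this
        exact this.mono_left nhdsWithin_le_nhds
      · filter_upwards [self_mem_nhdsWithin] with t ht using hden t ht
    have h1 := (tendsto_inv_nhdsGT_zero.comp h0).const_mul_atTop
      (by positivity : 0 < 2 * k * v)
    refine h1.congr fun t => ?_
    rw [hΨ, div_eq_mul_inv]; rfl
  have hmain := ((kummerM_ratio ha1 hab).comp hΨtop).const_mul (b - a)
  rw [hlim]
  refine hmain.congr' ?_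
  filter_upwards [self_mem_nhdsWithin] with t ht
  have ht : t < T := ht
  have hz := hΨpos v t hv ht
  have hlin : HasDerivAt (fun v' => Ψ v' t) (Ψ v t / v) v := by
    have h1 : (fun v' => Ψ v' t) = fun v' => (Ψ v t / v) * v' := by
      ext v'
      rw [hΨ, hΨ]
      have := (hden t ht).ne'
      field_simp
    have h2 := (hasDerivAt_id v).const_mul (Ψ v t / v)
    rw [mul_one] at h2
    rw [h1]
    exact h2
  have hd := ((hasDerivAt_kummer_weighted ha1 hab hz).comp v hlin).const_mul G
  have hev : (fun v' => f v' t) =ᶠ[𝓝 v] fun v' =>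
      G * ((fun z => Real.exp (-z) * z ^ (b - a) * kummerM a b z) ∘ fun v' => Ψ v' t) v' := by
    filter_upwards [lt_mem_nhds hv] with v' hv'
    exact hfg v' t (hΨpos v' t hv' ht)
  rw [(hd.congr_of_eventuallyEq hev).deriv, hfg v t hz]
  have hM : 0 < kummerM a b (Ψ v t) := by
    rw [kummerM_eq]
    refine (kummerCoeff_summable (by linarith) hab _).tsum_pos (fun n => ?_) 0 ?_
    · have := kummerCoeff_pos (by linarith : 0 < a) (by linarith : 0 < b) n
      positivity
    · simp [kummerCoeff]
  have hE := Real.exp_pos (-(Ψ v t))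
  have hR := Real.rpow_pos_of_pos hz (b - a)
  simp only [Function.comp]
  field_simp
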